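/- arXiv:1011.1395 — 2 statements merged into one kernel-verified Lean document; each statement's English description precedes it below -/
import Mathlib

section
/- Let p be an odd prime, let q ≥ 1 be an integer, let M ≥ 1 be an integer, and set θ = p^{−M} ∈ ℚ_p, so ‖θ‖_p > 1. Let f(x) = ((θx + q)/(x + θ + q − 1))². Then for every x ∈ ℚ_p: (i) if ‖x‖_p > ‖θ‖_p then ‖f(x)‖_p = ‖θ‖_p²; (ii) if ‖q‖_p/‖θ‖_p < ‖x‖_p < ‖θ‖_p then ‖f(x)‖_p = ‖x‖_p²; (iii) if ‖x‖_p ≤ ‖q‖_p/‖θ‖_p then ‖f(x)‖_p ≤ (‖q‖_p/‖θ‖_p)². -/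
theorem aux_norm_add {p : ℕ} [Fact p.Prime] (a b : ℚ_[p]) (h : ‖b‖ < ‖a‖) : ‖a + b‖ = ‖a‖ := by
  rw [Padic.add_eq_max_of_ne (ne_of_gt h), max_eq_left h.le]

theorem stmt_15 (p : ℕ) [Fact p.Prime] (hp2 : p ≠ 2)
    (q : ℕ) (hq : 1 ≤ q) (M : ℕ) (hM : 1 ≤ M)
    (θ : ℚ_[p]) (hθ : θ = ((p : ℚ_[p]) ^ M)⁻¹)
    (f : ℚ_[p] → ℚ_[p])
    (hf : f = fun x => ((θ * x + q) / (x + θ + q - 1)) ^ 2) :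
    ∀ x : ℚ_[p],
      (‖θ‖ < ‖x‖ → ‖f x‖ = ‖θ‖ ^ 2) ∧
      (‖(q : ℚ_[p])‖ / ‖θ‖ < ‖x‖ → ‖x‖ < ‖θ‖ → ‖f x‖ = ‖x‖ ^ 2) ∧
      (‖x‖ ≤ ‖(q : ℚ_[p])‖ / ‖θ‖ → ‖f x‖ ≤ (‖(q : ℚ_[p])‖ / ‖θ‖) ^ 2) := by
  have hq1 : ‖(q : ℚ_[p])‖ ≤ 1 := by
    simpa using Padic.norm_int_le_one (p := p) (q : ℤ)
  have hq2 : ‖(q : ℚ_[p]) - 1‖ ≤ 1 := by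
    simpa using Padic.norm_int_le_one (p := p) ((q : ℤ) - 1)
  have hθ1 : 1 < ‖θ‖ := by
    rw [hθ, norm_inv, norm_pow]
    have hpos : 0 < ‖(p : ℚ_[p])‖ := by
      rw [norm_pos_iff]
      exact_mod_cast (Fact.out : p.Prime).ne_zero
    exact (one_lt_inv₀ (pow_pos hpos M)).2
      (pow_lt_one₀ hpos.le Padic.norm_p_lt_one (by omega))
  have hθ0 : 0 < ‖θ‖ := by linarith
  intro x
  have hden : ‖x‖ < ‖θ‖ → ‖x + θ + q - 1‖ = ‖θ‖ := by
    intro h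
    have e : x + θ + q - 1 = (θ + x) + (q - 1) := by ring
    have h1 := aux_norm_add θ x h
    rw [e, aux_norm_add _ _ (by rw [h1]; linarith), h1]
  have hnum : ‖(q : ℚ_[p])‖ / ‖θ‖ < ‖x‖ → ‖θ * x + q‖ = ‖θ‖ * ‖x‖ := by
    intro h
    rw [div_lt_iff₀ hθ0] at h
    rw [aux_norm_add _ _ (by rw [norm_mul]; linarith), norm_mul]
  have hqd : ‖(q : ℚ_[p])‖ / ‖θ‖ < ‖θ‖ := by
    rw [div_lt_iff₀ hθ0]; nlinarith
  subst hf
  simp only [norm_pow, norm_div]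
  refine ⟨fun h => ?_, fun h h' => ?_, fun h => ?_⟩
  · have e : x + θ + q - 1 = (x + θ) + (q - 1) := by ring
    have h1 := aux_norm_add x θ h
    rw [hnum (hqd.trans h), e, aux_norm_add _ _ (by rw [h1]; linarith), h1,
      mul_div_cancel_right₀ _ (by linarith)]
  · rw [hnum h, hden h', mul_div_cancel_left₀ _ hθ0.ne']
  · rw [hden (h.trans_lt hqd)]
    have h2 : ‖θ * x + q‖ ≤ ‖(q : ℚ_[p])‖ := by
      refine (Padic.nonarchimedean _ _).trans (max_le ?_ le_rfl)
      rw [le_div_iff₀ hθ0] at h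
      rw [norm_mul]; linarith
    gcongr
end

section
/- Let p be an odd prime, let q ≥ 1 be an integer, let M ≥ 1 be an integer, and set θ = p^{−M} ∈ ℚ_p, so ‖θ‖_p > 1. Let x₁ and x₂ be roots in ℚ_p of x² + (2θ − θ² + 2q − 1)x + q² = 0 with ‖x₁‖_p = ‖θ‖_p² and ‖x₂‖_p = (‖q‖_p/‖θ‖_p)². Let g(x) = (θx + q)/(x + θ + q − 1), and let h be a function assigning to every finite word w over the alphabet {0,1} an element h(w) ∈ ℚ_p such that h(w) = g(h(w·0)) · g(h(w·1)) for every word w (where w·i denotes w with the letter i appended). Then: (i) if ‖h(w)‖_p < 1 for every word w, then h(w) = x₂ for every word w; (ii) if ‖h(w)‖_p > 1 for every word w, then h(w) = x₁ for every word w. -/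
lemma aux_add {p : ℕ} [Fact p.Prime] {a b : ℚ_[p]} (hab : ‖b‖ < ‖a‖) : ‖a + b‖ = ‖a‖ := by
  rw [Padic.add_eq_max_of_ne (ne_of_gt hab), max_eq_left hab.le]

lemma aux_small {p : ℕ} [Fact p.Prime] {a : ℚ_[p]} (ha : ‖a‖ < 1) : ‖a‖ ≤ (p : ℝ)⁻¹ := by
  have := (Padic.norm_le_pow_iff_norm_lt_pow_add_one a (-1)).2 (by simpa using ha)
  simpa using this

lemma aux_big {p : ℕ} [Fact p.Prime] {a : ℚ_[p]} (ha : 1 < ‖a‖) : (p : ℝ) ≤ ‖a‖ := by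
  have hp : (0 : ℝ) < p := by exact_mod_cast (Fact.out : p.Prime).pos
  have h1 : ‖a⁻¹‖ < 1 := by rw [norm_inv]; exact inv_lt_one_of_one_lt₀ ha
  have h2 := aux_small h1
  rw [norm_inv] at h2
  exact (inv_le_inv₀ (by linarith) hp).1 h2

lemma aux_contr {p : ℕ} [Fact p.Prime] (f : List (Fin 2) → ℚ_[p]) (x : ℚ_[p]) (C c : ℝ)
    (hc0 : 0 ≤ c) (hc1 : c < 1) (hC : ∀ w, ‖f w - x‖ ≤ C)
    (hs : ∀ w, ‖f w - x‖ ≤ c * max ‖f (w ++ [0]) - x‖ ‖f (w ++ [1]) - x‖) (w : List (Fin 2)) :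
    f w = x := by
  have key : ∀ n : ℕ, ∀ w, ‖f w - x‖ ≤ c ^ n * C := by
    intro n
    induction n with
    | zero => simpa using hC
    | succ n ih =>
      intro w
      calc _ ≤ _ := hs w
        _ ≤ c * (c ^ n * C) := mul_le_mul_of_nonneg_left (max_le (ih _) (ih _)) hc0
        _ = _ := by ring
  have ht : Filter.Tendsto (fun n : ℕ => c ^ n * C) Filter.atTop (nhds 0) := by
    simpa using (tendsto_pow_atTop_nhds_zero_of_lt_one hc0 hc1).mul_const C
  have := ge_of_tendsto' ht (fun n => key n w)
  exact sub_eq_zero.1 (norm_le_zero_iff.1 this)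

lemma aux_prod {p : ℕ} [Fact p.Prime] (a b u : ℚ_[p]) (G r s t : ℝ) (hG : 0 ≤ G) (hr : 0 ≤ r)
    (hb : ‖b‖ ≤ G) (hu : ‖u‖ ≤ G) (h1 : ‖a - u‖ ≤ r * s) (h2 : ‖b - u‖ ≤ r * t) :
    ‖a * b - u * u‖ ≤ G * r * max s t := by
  have e : a * b - u * u = (a - u) * b + u * (b - u) := by ring
  rw [e]
  refine (Padic.nonarchimedean _ _).trans (max_le ?_ ?_)
  · rw [norm_mul]
    calc _ ≤ (r * max s t) * G := mul_le_mul (h1.trans (by gcongr; exact le_max_left _ _)) hb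
            (norm_nonneg _) ((norm_nonneg _).trans (h1.trans (by gcongr; exact le_max_left _ _)))
      _ = _ := by ring
  · rw [norm_mul]
    calc _ ≤ G * (r * max s t) := mul_le_mul hu (h2.trans (by gcongr; exact le_max_right _ _))
            (norm_nonneg _) hG
      _ = _ := by ring

lemma aux_diff {K : Type*} [Field K] (θ q x y : K) (hx : x + θ + q - 1 ≠ 0)
    (hy : y + θ + q - 1 ≠ 0) :
    (θ * x + q) / (x + θ + q - 1) - (θ * y + q) / (y + θ + q - 1)
      = ((θ - 1) * (θ + q)) * (x - y) / ((x + θ + q - 1) * (y + θ + q - 1)) := by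
  rw [div_sub_div _ _ hx hy]
  congr 1
  ring

lemma aux_fix {K : Type*} [Field K] (θ q x : K) (hx : x + θ + q - 1 ≠ 0)
    (h : x ^ 2 + (2 * θ - θ ^ 2 + 2 * q - 1) * x + q ^ 2 = 0) :
    x = (θ * x + q) / (x + θ + q - 1) * ((θ * x + q) / (x + θ + q - 1)) := by
  rw [div_mul_div_comm, eq_div_iff (mul_ne_zero hx hx)]
  linear_combination (x - 1) * h

theorem stmt_19 (p : ℕ) [Fact p.Prime] (hp2 : p ≠ 2)
    (q : ℕ) (hq : 1 ≤ q) (M : ℕ) (hM : 1 ≤ M)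
    (θ : ℚ_[p]) (hθ : θ = ((p : ℚ_[p]) ^ M)⁻¹)
    (x₁ x₂ : ℚ_[p])
    (h₁ : x₁ ^ 2 + (2 * θ - θ ^ 2 + 2 * q - 1) * x₁ + q ^ 2 = 0)
    (h₂ : x₂ ^ 2 + (2 * θ - θ ^ 2 + 2 * q - 1) * x₂ + q ^ 2 = 0)
    (hn₁ : ‖x₁‖ = ‖θ‖ ^ 2) (hn₂ : ‖x₂‖ = (‖(q : ℚ_[p])‖ / ‖θ‖) ^ 2)
    (g : ℚ_[p] → ℚ_[p])
    (hg : g = fun x => (θ * x + q) / (x + θ + q - 1))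
    (h : List (Fin 2) → ℚ_[p])
    (hrec : ∀ w : List (Fin 2), h w = g (h (w ++ [0])) * g (h (w ++ [1]))) :
    ((∀ w : List (Fin 2), ‖h w‖ < 1) → ∀ w : List (Fin 2), h w = x₂) ∧
    ((∀ w : List (Fin 2), 1 < ‖h w‖) → ∀ w : List (Fin 2), h w = x₁) := by
  have hp0 : (1 : ℝ) < p := by exact_mod_cast (Fact.out : p.Prime).one_lt
  have hT : ‖θ‖ = (p : ℝ) ^ M := by
    rw [hθ, norm_inv, norm_pow, Padic.norm_p, inv_pow, inv_inv]
  have hT1 : 1 < ‖θ‖ := by rw [hT]; exact one_lt_pow₀ hp0 (by omega)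
  have hT0 : 0 < ‖θ‖ := by linarith
  have hq1 : ‖(q : ℚ_[p])‖ ≤ 1 := by exact_mod_cast Padic.norm_int_le_one (p := p) (q : ℤ)
  have hd1 : ‖(q : ℚ_[p]) - 1‖ ≤ 1 := by
    have := Padic.norm_int_le_one (p := p) ((q : ℤ) - 1)
    push_cast at this
    exact this
  have hA : ‖(θ - 1) * (θ + q)‖ = ‖θ‖ ^ 2 := by
    rw [norm_mul, aux_add (lt_of_le_of_lt hq1 hT1), sub_eq_add_neg, aux_add (by simpa using hT1)]
    ring
  have hrec' : ∀ w, h w = (θ * h (w ++ [0]) + q) / (h (w ++ [0]) + θ + q - 1) *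
      ((θ * h (w ++ [1]) + q) / (h (w ++ [1]) + θ + q - 1)) := by
    intro w; have := hrec w; rw [hg] at this; exact this
  have hTd : ‖θ + ((q : ℚ_[p]) - 1)‖ = ‖θ‖ := aux_add (lt_of_le_of_lt hd1 hT1)
  constructor
  · intro hs
    have hD : ∀ x : ℚ_[p], ‖x‖ < 1 → ‖x + θ + q - 1‖ = ‖θ‖ := by
      intro x hx
      have e : x + θ + q - 1 = (θ + (q - 1)) + x := by ring
      rw [e, aux_add (by rw [hTd]; linarith), hTd]
    have hD0 : ∀ x : ℚ_[p], ‖x‖ < 1 → x + θ + q - 1 ≠ 0 := by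
      intro x hx
      rw [← norm_pos_iff, hD x hx]; exact hT0
    have hG : ∀ x : ℚ_[p], ‖x‖ < 1 → ‖(θ * x + q) / (x + θ + q - 1)‖ ≤ (p : ℝ)⁻¹ := by
      intro x hx
      apply aux_small
      rw [norm_div, hD x hx, div_lt_one hT0]
      refine lt_of_le_of_lt (Padic.nonarchimedean _ _) (max_lt ?_ (by linarith))
      rw [norm_mul]; nlinarith
    have hdf : ∀ x y : ℚ_[p], ‖x‖ < 1 → ‖y‖ < 1 →
        ‖(θ * x + q) / (x + θ + q - 1) - (θ * y + q) / (y + θ + q - 1)‖ ≤ 1 * ‖x - y‖ := by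
      intro x y hx hy
      rw [aux_diff _ _ _ _ (hD0 x hx) (hD0 y hy), norm_div, norm_mul, hA, norm_mul, hD x hx, hD y hy]
      apply le_of_eq
      field_simp
    have hx2 : ‖x₂‖ < 1 := by
      rw [hn₂]
      have : ‖(q : ℚ_[p])‖ / ‖θ‖ < 1 := by rw [div_lt_one hT0]; linarith
      exact pow_lt_one₀ (by positivity) this (by norm_num)
    have hf := aux_fix θ (q : ℚ_[p]) x₂ (hD0 _ hx2) h₂
    refine aux_contr h x₂ 1 ((p : ℝ)⁻¹ * 1) (by positivity)
      (by rw [mul_one]; exact inv_lt_one_of_one_lt₀ hp0) ?_ ?_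
    · intro w
      rw [sub_eq_add_neg]
      exact (Padic.nonarchimedean _ _).trans (max_le (hs w).le (by rw [norm_neg]; exact hx2.le))
    · intro w
      have := aux_prod _ _ _ _ _ _ _ (by positivity) zero_le_one (hG _ (hs (w ++ [1]))) (hG _ hx2)
        (hdf _ _ (hs (w ++ [0])) hx2) (hdf _ _ (hs (w ++ [1])) hx2)
      rwa [← hrec' w, ← hf] at this
  · intro hb
    have hN : ∀ x : ℚ_[p], 1 < ‖x‖ → ‖θ * x + q‖ = ‖θ‖ * ‖x‖ := by
      intro x hx
      rw [aux_add (by rw [norm_mul]; nlinarith), norm_mul]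
    have hnz : ∀ w, h w ≠ 0 := fun w => by rw [← norm_pos_iff]; linarith [hb w]
    have hlow : ∀ (x : ℚ_[p]) (m : ℝ), 1 < ‖x‖ → x + θ + q - 1 ≠ 0 → m ≤ ‖x‖ → m ≤ ‖θ‖ →
        m ≤ ‖(θ * x + q) / (x + θ + q - 1)‖ := by
      intro x m hx h0 hm hmT
      rw [norm_div, hN x hx, le_div_iff₀ (norm_pos_iff.2 h0)]
      have e : x + θ + q - 1 = x + (θ + (q - 1)) := by ring
      have : ‖x + θ + q - 1‖ ≤ max ‖x‖ ‖θ‖ := by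
        rw [e, ← hTd]; exact Padic.nonarchimedean _ _
      rcases le_max_iff.1 this with h5 | h5
      · exact mul_le_mul hmT h5 (norm_nonneg _) hT0.le
      · rw [mul_comm ‖θ‖]
        exact mul_le_mul hm h5 (norm_nonneg _) (norm_nonneg _)
    have hstep : ∀ m : ℝ, 0 ≤ m → m ≤ ‖θ‖ → (∀ w, m ≤ ‖h w‖) → ∀ w, m * m ≤ ‖h w‖ := by
      intro m hm0 hmT hm w
      have hw := hnz w
      rw [hrec' w] at hw
      have ha := right_ne_zero_of_mul hw
      have hc := left_ne_zero_of_mul hw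
      have ha' := (div_ne_zero_iff.1 ha).2
      have hc' := (div_ne_zero_iff.1 hc).2
      rw [hrec' w, norm_mul]
      exact mul_le_mul (hlow _ _ (hb _) hc' (hm _) hmT) (hlow _ _ (hb _) ha' (hm _) hmT) hm0
        (norm_nonneg _)
    have hpk : ∀ k : ℕ, k ≤ M → ∀ w, (p : ℝ) ^ k ≤ ‖h w‖ := by
      intro k
      induction k with
      | zero => intro _ w; simpa using (hb w).le
      | succ k ih =>
        intro hk w
        rcases Nat.eq_zero_or_pos k with rfl | hk0
        · simpa using aux_big (hb w)
        · have := hstep ((p : ℝ) ^ k) (by positivity)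
            (by rw [hT]; exact pow_le_pow_right₀ hp0.le (by omega)) (ih (by omega)) w
          refine le_trans ?_ this
          rw [← pow_add]
          exact pow_le_pow_right₀ hp0.le (by omega)
    have hTT : ∀ w, ‖θ‖ * ‖θ‖ ≤ ‖h w‖ :=
      hstep _ hT0.le le_rfl (by rw [hT]; exact hpk M le_rfl)
    have hTlt : ∀ w, ‖θ‖ < ‖h w‖ := fun w => lt_of_lt_of_le (by nlinarith) (hTT w)
    have hD : ∀ x : ℚ_[p], ‖θ‖ < ‖x‖ → ‖x + θ + q - 1‖ = ‖x‖ := by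
      intro x hx
      have e : x + θ + q - 1 = x + (θ + (q - 1)) := by ring
      rw [e, aux_add (by rw [hTd]; exact hx)]
    have hD0 : ∀ x : ℚ_[p], ‖θ‖ < ‖x‖ → x + θ + q - 1 ≠ 0 := by
      intro x hx
      rw [← norm_pos_iff, hD x hx]; linarith
    have hG : ∀ x : ℚ_[p], ‖θ‖ < ‖x‖ → ‖(θ * x + q) / (x + θ + q - 1)‖ = ‖θ‖ := by
      intro x hx
      rw [norm_div, hD x hx, hN x (by linarith), mul_div_assoc, div_self (by linarith), mul_one]
    have heq : ∀ w, ‖h w‖ = ‖θ‖ ^ 2 := by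
      intro w
      rw [hrec' w, norm_mul, hG _ (hTlt _), hG _ (hTlt _)]; ring
    have hx1 : ‖θ‖ < ‖x₁‖ := by rw [hn₁]; nlinarith
    have hdf : ∀ x y : ℚ_[p], ‖x‖ = ‖θ‖ ^ 2 → ‖y‖ = ‖θ‖ ^ 2 →
        ‖(θ * x + q) / (x + θ + q - 1) - (θ * y + q) / (y + θ + q - 1)‖
          ≤ (‖θ‖ ^ 2)⁻¹ * ‖x - y‖ := by
      intro x y hx hy
      have hx' : ‖θ‖ < ‖x‖ := by rw [hx]; nlinarith
      have hy' : ‖θ‖ < ‖y‖ := by rw [hy]; nlinarith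
      rw [aux_diff _ _ _ _ (hD0 x hx') (hD0 y hy'), norm_div, norm_mul, hA, norm_mul, hD x hx',
        hD y hy', hx, hy]
      apply le_of_eq
      field_simp
    have hf := aux_fix θ (q : ℚ_[p]) x₁ (hD0 _ hx1) h₁
    refine aux_contr h x₁ (‖θ‖ ^ 2) (‖θ‖ * (‖θ‖ ^ 2)⁻¹) (by positivity) ?_ ?_ ?_
    · rw [← div_eq_mul_inv, div_lt_one (by positivity)]; nlinarith
    · intro w
      rw [sub_eq_add_neg]
      exact (Padic.nonarchimedean _ _).trans
        (max_le (heq w).le (by rw [norm_neg]; exact hn₁.le))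
    · intro w
      have := aux_prod _ _ _ _ _ _ _ hT0.le (by positivity) (hG _ (hTlt (w ++ [1]))).le
        (hG _ hx1).le (hdf _ _ (heq (w ++ [0])) hn₁) (hdf _ _ (heq (w ++ [1])) hn₁)
      rwa [← hrec' w, ← hf] at this
end
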